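/- Let h(x) := e^{-r(T−t)} (1/λ)(1−e^{-λ(T−t)}) x (the jump increment of the Theorem 2.1 variance-swap price). Then the quadratic hedging-error functional f(φ) := φ² S² σ_t² − 2 ρ' σ c S Y σ_t φ + λ ∫_{(0,∞)} ( φ S (e^{ρ(1−θ)x} − 1) − (1−θ) h(x) )² ν(dx) + λ ∫_{(0,∞)} ( φ S (e^{ρθx} − 1) − θ h(x) )² νᵇ(dx) attains its unique global minimum over φ ∈ ℝ at φ = Δ := ( ρ' σ σ_t (Y/S) c + A + B ) / ( σ_t² + λ ∫_{(0,∞)} (e^{ρ(1−θ)x} − 1)² ν(dx) + λ ∫_{(0,∞)} (e^{ρθx} − 1)² νᵇ(dx) ), where A := ((1−θ)/S) e^{-r(T−t)} (1−e^{-λ(T−t)}) ∫_{(0,∞)} x (e^{ρ(1−θ)x} − 1) ν(dx) and B := (θ/S) e^{-r(T−t)} (1−e^{-λ(T−t)}) ∫_{(0,∞)} x (e^{ρθx} − 1) νᵇ(dx). (This is Corollary 2.3 of the paper: the risk-minimizing quadratic hedge ratio under the refined BN-S model with the explicit variance-swap price.) -/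

import Mathlib

open Real MeasureTheory

/-- Expansion of the quadratic jump integral. -/
lemma quad_integral_expand (μ : Measure ℝ) (k a b : ℝ)
    (h1 : IntegrableOn (fun x => (Real.exp (k * x) - 1) ^ 2) (Set.Ioi 0) μ)
    (h2 : IntegrableOn (fun x => x ^ 2) (Set.Ioi 0) μ) :
    ∫ x in Set.Ioi (0 : ℝ), (a * (Real.exp (k * x) - 1) - b * x) ^ 2 ∂μ
      = a ^ 2 * (∫ x in Set.Ioi (0 : ℝ), (Real.exp (k * x) - 1) ^ 2 ∂μ)
        - 2 * a * b * (∫ x in Set.Ioi (0 : ℝ), x * (Real.exp (k * x) - 1) ∂μ)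
        + b ^ 2 * ∫ x in Set.Ioi (0 : ℝ), x ^ 2 ∂μ := by
  have h3 : IntegrableOn (fun x => x * (Real.exp (k * x) - 1)) (Set.Ioi 0) μ := by
    refine Integrable.mono' (h1.add h2) (by fun_prop) (Filter.Eventually.of_forall fun x => ?_)
    simp only [Pi.add_apply, Real.norm_eq_abs]
    rw [abs_le]
    constructor <;>
      nlinarith [sq_nonneg (x - (Real.exp (k * x) - 1)), sq_nonneg (x + (Real.exp (k * x) - 1)),
        sq_nonneg x, sq_nonneg (Real.exp (k * x) - 1)]
  rw [← integral_const_mul, ← integral_const_mul, ← integral_const_mul,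
    ← integral_sub (h1.const_mul _) (h3.const_mul _),
    ← integral_add (f := fun x => a ^ 2 * (Real.exp (k * x) - 1) ^ 2
      - 2 * a * b * (x * (Real.exp (k * x) - 1)))
      ((h1.const_mul _).sub (h3.const_mul _)) (h2.const_mul _)]
  congr 1
  ext x
  ring

/-- Corollary 2.3 of the paper: with the explicit variance-swap jump increment
`h x = exp (-r (T−t)) (1/λ) (1 − exp (-λ (T−t))) x`, the quadratic hedging-error
functional attains its unique global minimum at the explicit hedge ratio Δ. -/
theorem quadraticHedge_min_explicit
    (ν νb : Measure ℝ) (lam S σt Y σ ρ ρ' c θ r t T : ℝ)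
    (hlam : 0 < lam) (hS : 0 < S) (hσt : 0 < σt) (hθ0 : 0 ≤ θ) (hθ1 : θ ≤ 1)
    (htT : t ≤ T)
    (hint1 : IntegrableOn (fun x => (Real.exp (ρ * (1 - θ) * x) - 1) ^ 2) (Set.Ioi 0) ν)
    (hint2 : IntegrableOn (fun x => (Real.exp (ρ * θ * x) - 1) ^ 2) (Set.Ioi 0) νb)
    (hint3 : IntegrableOn (fun x => x ^ 2) (Set.Ioi 0) ν)
    (hint4 : IntegrableOn (fun x => x ^ 2) (Set.Ioi 0) νb)
    (h : ℝ → ℝ)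
    (hh : ∀ x : ℝ, h x = Real.exp (-r * (T - t)) * (1 / lam) *
      (1 - Real.exp (-lam * (T - t))) * x)
    (f : ℝ → ℝ)
    (hf : ∀ φ : ℝ, f φ = φ ^ 2 * S ^ 2 * σt ^ 2 - 2 * ρ' * σ * c * S * Y * σt * φ
      + lam * ∫ x in Set.Ioi (0 : ℝ),
          (φ * S * (Real.exp (ρ * (1 - θ) * x) - 1) - (1 - θ) * h x) ^ 2 ∂ν
      + lam * ∫ x in Set.Ioi (0 : ℝ),
          (φ * S * (Real.exp (ρ * θ * x) - 1) - θ * h x) ^ 2 ∂νb)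
    (A B Δ : ℝ)
    (hA : A = ((1 - θ) / S) * Real.exp (-r * (T - t)) * (1 - Real.exp (-lam * (T - t))) *
      ∫ x in Set.Ioi (0 : ℝ), x * (Real.exp (ρ * (1 - θ) * x) - 1) ∂ν)
    (hB : B = (θ / S) * Real.exp (-r * (T - t)) * (1 - Real.exp (-lam * (T - t))) *
      ∫ x in Set.Ioi (0 : ℝ), x * (Real.exp (ρ * θ * x) - 1) ∂νb)
    (hΔ : Δ = (ρ' * σ * σt * (Y / S) * c + A + B) /
      (σt ^ 2 + lam * (∫ x in Set.Ioi (0 : ℝ), (Real.exp (ρ * (1 - θ) * x) - 1) ^ 2 ∂ν)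
        + lam * ∫ x in Set.Ioi (0 : ℝ), (Real.exp (ρ * θ * x) - 1) ^ 2 ∂νb)) :
    ∀ φ : ℝ, f Δ ≤ f φ ∧ (f φ = f Δ → φ = Δ) := by
  have hne := hlam.ne'
  have hSne := hS.ne'
  set P := ∫ x in Set.Ioi (0 : ℝ), (Real.exp (ρ * (1 - θ) * x) - 1) ^ 2 ∂ν with hP
  set Q := ∫ x in Set.Ioi (0 : ℝ), (Real.exp (ρ * θ * x) - 1) ^ 2 ∂νb with hQ
  have hP0 : 0 ≤ P := integral_nonneg fun x => sq_nonneg _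
  have hQ0 : 0 ≤ Q := integral_nonneg fun x => sq_nonneg _
  have hD : 0 < σt ^ 2 + lam * P + lam * Q := by positivity
  rw [eq_div_iff hD.ne', hA, hB] at hΔ
  have key : ∀ φ, f φ - f Δ = S ^ 2 * (σt ^ 2 + lam * P + lam * Q) * (φ - Δ) ^ 2 := by
    intro φ
    simp only [hf, hh, ← mul_assoc]
    rw [quad_integral_expand ν _ _ _ hint1 hint3, quad_integral_expand ν _ _ _ hint1 hint3,
      quad_integral_expand νb _ _ _ hint2 hint4, quad_integral_expand νb _ _ _ hint2 hint4,
      ← hP, ← hQ]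
    generalize (∫ x in Set.Ioi (0 : ℝ), x * (Real.exp (ρ * (1 - θ) * x) - 1) ∂ν) = I at *
    generalize (∫ x in Set.Ioi (0 : ℝ), x * (Real.exp (ρ * θ * x) - 1) ∂νb) = J at *
    generalize Real.exp (-r * (T - t)) = e1 at *
    generalize Real.exp (-lam * (T - t)) = e2 at *
    have h2 : S ^ 2 * (Δ * (σt ^ 2 + lam * P + lam * Q)) =
        S * (ρ' * σ * σt * Y * c + (1 - θ) * e1 * (1 - e2) * I + θ * e1 * (1 - e2) * J) := by
      rw [hΔ]; field_simp
    field_simp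
    linear_combination (2 * lam * (φ - Δ)) * h2
  intro φ
  have hk := key φ
  have hc : 0 < S ^ 2 * (σt ^ 2 + lam * P + lam * Q) := by positivity
  refine ⟨?_, fun he => ?_⟩
  · have := mul_nonneg hc.le (sq_nonneg (φ - Δ))
    linarith
  · rw [he, sub_self] at hk
    have h0 := (mul_eq_zero.mp hk.symm).resolve_left hc.ne'
    exact sub_eq_zero.mp (pow_eq_zero_iff (two_ne_zero) |>.mp h0)
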